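/- Let σ_{XYE} = Σ_{x,y} P_{XY}(x,y) |x⟩⟨x| ⊗ |y⟩⟨y| ⊗ σ_E^{x,y} be a ccq-state and let P_{Y'|Y} be a classical channel (a conditional probability distribution) from 𝒴 to a finite set 𝒴'. Define the ccq-state σ_{XY'E} := Σ_{x,y,y'} P_{XY}(x,y) · P_{Y'|Y}(y'|y) · |x⟩⟨x| ⊗ |y'⟩⟨y'| ⊗ σ_E^{x,y}. Then M(X;Y';E) ≤ M(X;Y;E). -/

import Mathlib

open scoped Matrix Kronecker BigOperators ComplexOrder
open Matrix

noncomputable section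

/-- The outer product `|v⟩⟨v|` of a vector. -/
def outerPr {n : Type*} (v : n → ℂ) : Matrix n n ℂ :=
  Matrix.of fun i j => v i * star (v j)

/-- A density operator: positive semidefinite with trace one. -/
def IsDensity {n : Type*} [Fintype n] [DecidableEq n] (ρ : Matrix n n ℂ) : Prop :=
  ρ.PosSemidef ∧ ρ.trace = 1

/-- The eigenvalues of a matrix (as a real vector), `0` if the matrix is not Hermitian. -/
def eigs {n : Type*} [Fintype n] [DecidableEq n] (ρ : Matrix n n ℂ) : n → ℝ :=
  if h : ρ.IsHermitian then h.eigenvalues else 0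

/-- Trace distance `δ(ρ,σ) = (1/2) tr|ρ-σ|`. -/
def traceDist {n : Type*} [Fintype n] [DecidableEq n] (ρ σ : Matrix n n ℂ) : ℝ :=
  (1 / 2) * ∑ i, |eigs (ρ - σ) i|

/-- Von Neumann entropy (base 2). -/
def vnEntropy {n : Type*} [Fintype n] [DecidableEq n] (ρ : Matrix n n ℂ) : ℝ :=
  ∑ i, -(eigs ρ i * Real.logb 2 (eigs ρ i))

/-- Partial trace over the second (right) tensor factor. -/
def ptraceR {m w : Type*} [Fintype w] (M : Matrix (m × w) (m × w) ℂ) : Matrix m m ℂ :=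
  Matrix.of fun i j => ∑ k, M (i, k) (j, k)

/-- Partial trace over the first (left) tensor factor. -/
def ptraceL {m w : Type*} [Fintype m] (M : Matrix (m × w) (m × w) ℂ) : Matrix w w ℂ :=
  Matrix.of fun i j => ∑ k, M (k, i) (k, j)

/-- `ψ` is a purification of `ρ`: a unit vector on `d × w` whose partial trace over `w`
equals `ρ`. -/
def IsPurification {d w : Type*} [Fintype d] [Fintype w]
    (ψ : d × w → ℂ) (ρ : Matrix d d ℂ) : Prop :=
  (∑ i, Complex.normSq (ψ i)) = 1 ∧ ptraceR (outerPr ψ) = ρ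

/-- ε-smooth Rényi entropy of order 0 of a distribution. -/
def H0smooth {X : Type*} [Fintype X] (P : X → ℝ) (ε : ℝ) : ℝ :=
  sInf { r : ℝ | ∃ Q : X → ℝ, (∀ x, 0 ≤ Q x) ∧ (∑ x, |P x - Q x|) ≤ ε ∧
    r = Real.logb 2 (Nat.card {x : X // Q x ≠ 0}) }

/-- ε-smooth Rényi entropy of order 2 of a distribution. -/
def H2smooth {X : Type*} [Fintype X] (P : X → ℝ) (ε : ℝ) : ℝ :=
  sSup { r : ℝ | ∃ Q : X → ℝ, (∀ x, 0 ≤ Q x) ∧ (∑ x, |P x - Q x|) ≤ ε ∧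
    r = -Real.logb 2 (∑ x, Q x ^ 2) }

/-- ε-smooth Rényi entropy of order 0 of a density operator (entropy of its eigenvalues). -/
def S0smooth {n : Type*} [Fintype n] [DecidableEq n] (ρ : Matrix n n ℂ) (ε : ℝ) : ℝ :=
  H0smooth (eigs ρ) ε

/-- ε-smooth Rényi entropy of order 2 of a density operator (entropy of its eigenvalues). -/
def S2smooth {n : Type*} [Fintype n] [DecidableEq n] (ρ : Matrix n n ℂ) (ε : ℝ) : ℝ :=
  H2smooth (eigs ρ) ε

/-- Standard basis vector `|y⟩`. -/
def stdb {Y : Type*} [DecidableEq Y] (y : Y) : Y → ℂ := fun y' => if y' = y then 1 else 0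

/-- `n`-fold tensor (Kronecker) product of matrices, one per site. -/
def tpow {n : ℕ} {a b : Type*} (M : Fin n → Matrix a b ℂ) :
    Matrix (Fin n → a) (Fin n → b) ℂ :=
  Matrix.of fun p q => ∏ i, M i (p i) (q i)

/-- `n`-fold tensor product of vectors, one per site. -/
def vpow {n : ℕ} {a : Type*} (v : Fin n → a → ℂ) : (Fin n → a) → ℂ :=
  fun p => ∏ i, v i (p i)

/-- The unitary `U_π` permuting the `n` tensor factors. -/
def permMat {n : ℕ} {a : Type*} [DecidableEq a] (π : Equiv.Perm (Fin n)) :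
    Matrix (Fin n → a) (Fin n → a) ℂ :=
  Matrix.of fun p q => if q = p ∘ π then 1 else 0

/-- Shannon entropy (base 2) of a distribution. -/
def shEnt {X : Type*} [Fintype X] (P : X → ℝ) : ℝ :=
  ∑ x, -(P x * Real.logb 2 (P x))

/-- The binary entropy function. -/
def binEnt (ε : ℝ) : ℝ := -(ε * Real.logb 2 ε) - (1 - ε) * Real.logb 2 (1 - ε)

/-- The quantity `M(X;Y;E)` of a ccq-state: the supremum over all families of density
operators `σ_U^x`, `σ_V^x` of `S(U|VE) - S(U|VY)`. -/
def Mmeas {X Y E : Type*} [Fintype X] [Fintype Y] [Fintype E] [DecidableEq Y] [DecidableEq E]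
    (P : X → Y → ℝ) (σE : X → Y → Matrix E E ℂ) : ℝ :=
  sSup { r : ℝ | ∃ (dU dV : ℕ) (σU : X → Matrix (Fin dU) (Fin dU) ℂ)
      (σV : X → Matrix (Fin dV) (Fin dV) ℂ),
      (∀ x, IsDensity (σU x)) ∧ (∀ x, IsDensity (σV x)) ∧
      r = (vnEntropy (∑ x, ∑ y, P x y • (σU x ⊗ₖ (σV x ⊗ₖ σE x y)))
            - vnEntropy (∑ x, ∑ y, P x y • (σV x ⊗ₖ σE x y)))
        - (vnEntropy (∑ x, ∑ y, P x y • (σU x ⊗ₖ (σV x ⊗ₖ outerPr (stdb y))))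
            - vnEntropy (∑ x, ∑ y, P x y • (σV x ⊗ₖ outerPr (stdb y)))) }

/-!
`M(X;Y;E)` depends on the state only through `P_XY` and the marginal on `XE`, and the channel on `Y`
leaves that marginal alone; so `S(U|VE)` does not change. On the other side, `S(U|VY)` is the sum
over `y` of the conditional entropies `S(U|V)` of the unnormalized states `ω_y` of `UV` given `y`,
and the channel replaces `ω_y` by `∑ y, Q(y'|y) ω_y`. As `S(U|V)` is homogeneous and superadditive
(this is strong subadditivity), `S(U|VY)` can only grow.

Superadditivity follows from the joint subadditivity of the relative entropy, which is the integral
`∫₀¹ (1 - s) χ²ₛ(ρ, σ) ds` of quantum `χ²`-divergences, each of them a maximum of functionals that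
are linear in `(ρ, σ)`. It also bounds the values of `S(U|VE) - S(U|VY)` by the entropy of `X`, so
that the supremum of reals defining `M` is a genuine one and not the junk value `0`.
-/

section Shannon

variable {X Y : Type*} [Fintype X] [Fintype Y]

lemma shEnt_eq_sum_negMulLog_div (p : X → ℝ) :
    shEnt p = (∑ x, Real.negMulLog (p x)) / Real.log 2 := by
  simp only [shEnt, Real.logb, Real.negMulLog, Finset.sum_div]
  exact Finset.sum_congr rfl fun x _ => by ring

lemma shEnt_const_mul (c : ℝ) (p : X → ℝ) :
    shEnt (fun x => c * p x) = c * shEnt p - (∑ x, p x) * (c * Real.logb 2 c) := by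
  simp only [shEnt_eq_sum_negMulLog_div, Real.negMulLog_mul, Finset.sum_add_distrib,
    ← Finset.mul_sum, ← Finset.sum_mul]
  rw [Real.logb, Real.negMulLog]
  ring

lemma shEnt_prod_mul (p : X → ℝ) (q : Y → ℝ) :
    shEnt (fun i : X × Y => p i.1 * q i.2) = (∑ y, q y) * shEnt p + (∑ x, p x) * shEnt q := by
  simp only [shEnt_eq_sum_negMulLog_div, Real.negMulLog_mul, Fintype.sum_prod_type,
    Finset.sum_add_distrib, ← Finset.mul_sum, ← Finset.sum_mul]
  ring

lemma continuous_shEnt_add_const (p : X → ℝ) : Continuous fun c : ℝ => shEnt fun x => p x + c := by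
  simp only [shEnt_eq_sum_negMulLog_div]
  fun_prop

end Shannon

/-- `U` is a unitary matrix whose columns form an eigenbasis of `A` with real eigenvalues `p`.
The eigenvalues come as a family in the order of the columns, so that they can be tracked through
Kronecker products and other constructions, unlike the sorted `Matrix.IsHermitian.eigenvalues`. -/
structure Diagonalizes {n : Type*} [Fintype n] [DecidableEq n]
    (U : Matrix n n ℂ) (p : n → ℝ) (A : Matrix n n ℂ) : Prop where
  conjTranspose_mul_self : Uᴴ * U = 1
  eq_mul : A = U * diagonal (fun i => (p i : ℂ)) * Uᴴ

section Spectral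

variable {n m : Type*} [Fintype n] [DecidableEq n] [Fintype m] [DecidableEq m]
  {U V A B : Matrix n n ℂ} {p q : n → ℝ}

lemma diagonalizes_eigenvectorUnitary (hA : A.IsHermitian) :
    Diagonalizes hA.eigenvectorUnitary hA.eigenvalues A :=
  ⟨Unitary.coe_star_mul_self _, hA.spectral_theorem⟩

namespace Diagonalizes

lemma mul_conjTranspose_self (h : Diagonalizes U p A) : U * Uᴴ = 1 :=
  mul_eq_one_comm.mp h.conjTranspose_mul_self

lemma conjTranspose_mul_mul (h : Diagonalizes U p A) :
    Uᴴ * A * U = diagonal fun i => (p i : ℂ) := by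
  rw [h.eq_mul, Matrix.mul_assoc, Matrix.mul_assoc, h.conjTranspose_mul_self, Matrix.mul_one,
    ← Matrix.mul_assoc, h.conjTranspose_mul_self, Matrix.one_mul]

lemma isHermitian (h : Diagonalizes U p A) : A.IsHermitian := by
  rw [h.eq_mul]
  refine isHermitian_mul_mul_conjTranspose U ?_
  simp [IsHermitian, diagonal_conjTranspose, Pi.star_def]

lemma trace_eq (h : Diagonalizes U p A) : A.trace = ((∑ i, p i : ℝ) : ℂ) := by
  rw [h.eq_mul, trace_mul_comm, ← Matrix.mul_assoc, h.conjTranspose_mul_self, Matrix.one_mul,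
    trace_diagonal, Complex.ofReal_sum]

protected lemma id (h : Diagonalizes U p A) : Diagonalizes U (fun _ => 1) 1 where
  conjTranspose_mul_self := h.conjTranspose_mul_self
  eq_mul := by simp [h.mul_conjTranspose_self]

protected lemma one : Diagonalizes (1 : Matrix n n ℂ) (fun _ => 1) 1 where
  conjTranspose_mul_self := by simp
  eq_mul := by simp

protected lemma smul (h : Diagonalizes U p A) (c : ℝ) :
    Diagonalizes U (fun i => c * p i) (c • A) where
  conjTranspose_mul_self := h.conjTranspose_mul_self
  eq_mul := by
    have hdiag : (diagonal fun i => ((c * p i : ℝ) : ℂ)) = c • diagonal fun i => (p i : ℂ) := by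
      simp [← diagonal_smul, Pi.smul_def]
    rw [hdiag, Matrix.mul_smul, Matrix.smul_mul, ← h.eq_mul]

protected lemma add (hA : Diagonalizes U p A) (hB : Diagonalizes U q B) :
    Diagonalizes U (fun i => p i + q i) (A + B) where
  conjTranspose_mul_self := hA.conjTranspose_mul_self
  eq_mul := by
    simp only [Complex.ofReal_add, ← diagonal_add, Matrix.mul_add, Matrix.add_mul, ← hA.eq_mul,
      ← hB.eq_mul]

protected lemma mul (hA : Diagonalizes U p A) (hB : Diagonalizes U q B) :
    Diagonalizes U (fun i => p i * q i) (A * B) where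
  conjTranspose_mul_self := hA.conjTranspose_mul_self
  eq_mul := by
    simp only [Complex.ofReal_mul, ← diagonal_mul_diagonal, hA.eq_mul, hB.eq_mul]
    simp only [Matrix.mul_assoc]
    rw [← Matrix.mul_assoc Uᴴ U, hA.conjTranspose_mul_self, Matrix.one_mul]

protected lemma kronecker {W C : Matrix m m ℂ} {r : m → ℝ} (hA : Diagonalizes U p A)
    (hC : Diagonalizes W r C) :
    Diagonalizes (U ⊗ₖ W) (fun i => p i.1 * r i.2) (A ⊗ₖ C) where
  conjTranspose_mul_self := by
    rw [conjTranspose_kronecker, ← mul_kronecker_mul, hA.conjTranspose_mul_self,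
      hC.conjTranspose_mul_self, one_kronecker_one]
  eq_mul := by
    have hdiag : (diagonal fun i : n × m => ((p i.1 * r i.2 : ℝ) : ℂ)) =
        (diagonal fun i => (p i : ℂ)) ⊗ₖ (diagonal fun i => (r i : ℂ)) := by
      rw [diagonal_kronecker_diagonal]
      push_cast
      rfl
    rw [hdiag, conjTranspose_kronecker, ← mul_kronecker_mul, ← mul_kronecker_mul, ← hA.eq_mul,
      ← hC.eq_mul]

protected lemma submatrix (h : Diagonalizes U p A) (e : m ≃ n) :
    Diagonalizes (U.submatrix e e) (p ∘ e) (A.submatrix e e) where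
  conjTranspose_mul_self := by
    rw [conjTranspose_submatrix, submatrix_mul_equiv, h.conjTranspose_mul_self,
      submatrix_one_equiv]
  eq_mul := by
    have hdiag : (diagonal fun i => (((p ∘ e) i : ℝ) : ℂ)) =
        (diagonal fun i => (p i : ℂ)).submatrix e e := by
      rw [submatrix_diagonal_equiv]
      rfl
    rw [hdiag, conjTranspose_submatrix, submatrix_mul_equiv, submatrix_mul_equiv, ← h.eq_mul]

protected lemma blockDiagonal {W C : m → Matrix n n ℂ} {r : m → n → ℝ}
    (h : ∀ k, Diagonalizes (W k) (r k) (C k)) :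
    Diagonalizes (Matrix.blockDiagonal W) (fun i => r i.2 i.1) (Matrix.blockDiagonal C) where
  conjTranspose_mul_self := by
    simp only [blockDiagonal_conjTranspose, ← blockDiagonal_mul, (h _).conjTranspose_mul_self]
    exact blockDiagonal_one
  eq_mul := by
    rw [← blockDiagonal_diagonal fun k i => (r k i : ℂ), blockDiagonal_conjTranspose,
      ← blockDiagonal_mul, ← blockDiagonal_mul]
    exact congrArg _ (funext fun k => (h k).eq_mul)

lemma mul_diagonal_comp_mul_eq (hU : Diagonalizes U p A) (hV : Diagonalizes V q A) (f : ℝ → ℝ) :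
    U * diagonal (fun i => (f (p i) : ℂ)) * Uᴴ = V * diagonal (fun i => (f (q i) : ℂ)) * Vᴴ := by
  have hcomm : diagonal (fun i => (p i : ℂ)) * (Uᴴ * V) =
      Uᴴ * V * diagonal (fun i => (q i : ℂ)) := by
    rw [← hU.conjTranspose_mul_mul, ← hV.conjTranspose_mul_mul]
    simp only [Matrix.mul_assoc]
    rw [← Matrix.mul_assoc U, hU.mul_conjTranspose_self, Matrix.one_mul, ← Matrix.mul_assoc V,
      hV.mul_conjTranspose_self, Matrix.one_mul]
  have hcomm_comp : diagonal (fun i => (f (p i) : ℂ)) * (Uᴴ * V) =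
      Uᴴ * V * diagonal (fun i => (f (q i) : ℂ)) := by
    ext i j
    have hij := congrFun (congrFun hcomm i) j
    rw [diagonal_mul, mul_diagonal, mul_comm, mul_eq_mul_left_iff, Complex.ofReal_inj] at hij
    rw [diagonal_mul, mul_diagonal, mul_comm]
    rcases hij with hpq | hzero
    · rw [hpq]
    · rw [hzero, zero_mul, zero_mul]
  calc U * diagonal (fun i => (f (p i) : ℂ)) * Uᴴ
      = U * (diagonal (fun i => (f (p i) : ℂ)) * (Uᴴ * V)) * Vᴴ := by
        simp only [Matrix.mul_assoc, hV.mul_conjTranspose_self, Matrix.mul_one]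
    _ = U * Uᴴ * V * diagonal (fun i => (f (q i) : ℂ)) * Vᴴ := by
        rw [hcomm_comp]
        simp only [Matrix.mul_assoc]
    _ = V * diagonal (fun i => (f (q i) : ℂ)) * Vᴴ := by
        rw [hU.mul_conjTranspose_self, Matrix.one_mul]

protected lemma cfc (h : Diagonalizes U p A) (f : ℝ → ℝ) :
    Diagonalizes U (fun i => f (p i)) (cfc f A) where
  conjTranspose_mul_self := h.conjTranspose_mul_self
  eq_mul := by
    rw [h.mul_diagonal_comp_mul_eq (diagonalizes_eigenvectorUnitary h.isHermitian),
      h.isHermitian.cfc_eq]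
    rfl

lemma sum_comp_eigs (h : Diagonalizes U p A) (f : ℝ → ℝ) :
    ∑ i, f (eigs A i) = ∑ i, f (p i) := by
  have htrace := ((diagonalizes_eigenvectorUnitary h.isHermitian).cfc f).trace_eq.symm.trans
    (h.cfc f).trace_eq
  rw [eigs, dif_pos h.isHermitian]
  exact_mod_cast htrace

lemma vnEntropy_eq (h : Diagonalizes U p A) : vnEntropy A = shEnt p :=
  h.sum_comp_eigs fun t => -(t * Real.logb 2 t)

lemma trace_conjTranspose_mul_mul_mul (hA : Diagonalizes U p A) (hB : Diagonalizes V q B)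
    (Z M : Matrix n n ℂ) :
    (Zᴴ * A * M * B).trace =
      ∑ i, ∑ j, (p i * q j : ℂ) * (star ((Uᴴ * Z * V) i j) * (Uᴴ * M * V) i j) := by
  have hcycle : (Zᴴ * A * M * B).trace = ((Uᴴ * Z * V)ᴴ * (diagonal (fun i => (p i : ℂ)) *
      (Uᴴ * M * V) * diagonal (fun j => (q j : ℂ)))).trace := by
    rw [hA.eq_mul, hB.eq_mul, conjTranspose_mul, conjTranspose_mul, conjTranspose_conjTranspose]
    simp only [← Matrix.mul_assoc]
    rw [trace_mul_comm]
    simp only [← Matrix.mul_assoc]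
  rw [hcycle, Finset.sum_comm]
  simp only [trace, diag_apply, mul_apply (M := (Uᴴ * Z * V)ᴴ), conjTranspose_apply,
    mul_diagonal, diagonal_mul]
  exact Finset.sum_congr rfl fun j _ => Finset.sum_congr rfl fun i _ => by ring

lemma re_trace_mul (hA : Diagonalizes U p A) (hB : Diagonalizes V q B) :
    (A * B).trace.re = ∑ i, ∑ j, Complex.normSq ((Uᴴ * V) i j) * (p i * q j) := by
  have h := hA.trace_conjTranspose_mul_mul_mul hB 1 1
  simp only [conjTranspose_one, Matrix.one_mul, Matrix.mul_one, Complex.star_def,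
    ← Complex.normSq_eq_conj_mul_self] at h
  rw [h]
  norm_cast
  simp only [mul_comm]

end Diagonalizes

end Spectral

section RelativeEntropy

variable {n : Type*} [Fintype n]

/-- The quadratic form `Z ↦ 2 Re tr Z†(ρ - σ) - (s tr Z†ρZ + (1 - s) Re tr Z†Zσ)`, whose maximum
over `Z` is `chiSq s ρ σ`. It is linear in the pair `(ρ, σ)`. -/
def chiSqForm (s : ℝ) (ρ σ Z : Matrix n n ℂ) : ℝ :=
  2 * (Zᴴ * (ρ - σ)).trace.re - (s * (Zᴴ * ρ * Z).trace.re + (1 - s) * (Zᴴ * Z * σ).trace.re)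

/-- The quantum `χ²`-divergence with weight `s`. For commuting `ρ` and `σ` with eigenvalues `p i`
and `q i` it is `∑ i, (p i - q i)² / (s * p i + (1 - s) * q i)`. -/
def chiSq (s : ℝ) (ρ σ : Matrix n n ℂ) : ℝ := ⨆ Z, chiSqForm s ρ σ Z

lemma chiSqForm_add (s : ℝ) (ρ₁ ρ₂ σ₁ σ₂ Z : Matrix n n ℂ) :
    chiSqForm s (ρ₁ + ρ₂) (σ₁ + σ₂) Z = chiSqForm s ρ₁ σ₁ Z + chiSqForm s ρ₂ σ₂ Z := by
  simp only [chiSqForm, Matrix.mul_add, Matrix.add_mul, Matrix.mul_sub, trace_add, trace_sub,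
    Complex.add_re, Complex.sub_re]
  ring

lemma convexCombo_pos {s a b : ℝ} (hs : s ∈ Set.Icc (0 : ℝ) 1) (ha : 0 < a) (hb : 0 < b) :
    0 < s * a + (1 - s) * b := by
  simpa using (convex_Ioi (0 : ℝ)) (Set.mem_Ioi.2 ha) (Set.mem_Ioi.2 hb) hs.1
    (sub_nonneg.2 hs.2) (by ring)

lemma two_mul_re_sub_mul_normSq {m : ℝ} (hm : 0 < m) (d : ℝ) (w c : ℂ) :
    2 * d * (star w * c).re - m * Complex.normSq w =
      Complex.normSq c * (d ^ 2 / m) - m * Complex.normSq (w - (d / m : ℝ) * c) := by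
  simp only [Complex.normSq_apply, Complex.sub_re, Complex.sub_im, Complex.mul_re, Complex.mul_im,
    Complex.ofReal_re, Complex.ofReal_im, Complex.star_def, Complex.conj_re, Complex.conj_im]
  field_simp
  ring

namespace Diagonalizes

variable [DecidableEq n] {U V ρ σ : Matrix n n ℂ} {p q : n → ℝ}

lemma chiSqForm_eq (hρ : Diagonalizes U p ρ) (hσ : Diagonalizes V q σ) (s : ℝ)
    (Z : Matrix n n ℂ) :
    chiSqForm s ρ σ Z = ∑ i, ∑ j, (2 * (p i - q j) * (star ((Uᴴ * Z * V) i j) * (Uᴴ * V) i j).re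
      - (s * p i + (1 - s) * q j) * Complex.normSq ((Uᴴ * Z * V) i j)) := by
  have hρ_lin := hρ.trace_conjTranspose_mul_mul_mul hσ.id Z 1
  have hσ_lin := hρ.id.trace_conjTranspose_mul_mul_mul hσ Z 1
  have hρ_quad := hρ.trace_conjTranspose_mul_mul_mul hσ.id Z Z
  have hσ_quad := hρ.id.trace_conjTranspose_mul_mul_mul hσ Z Z
  simp only [Complex.ofReal_one, mul_one, one_mul, Complex.star_def,
    ← Complex.normSq_eq_conj_mul_self] at hρ_lin hσ_lin hρ_quad hσ_quad
  rw [chiSqForm, Matrix.mul_sub, trace_sub, hρ_lin, hσ_lin, hρ_quad, hσ_quad]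
  simp only [Complex.star_def, Complex.sub_re, Complex.re_sum, Complex.re_ofReal_mul,
    Complex.ofReal_re, Finset.mul_sum, ← Finset.sum_sub_distrib, ← Finset.sum_add_distrib]
  exact Finset.sum_congr rfl fun i _ => Finset.sum_congr rfl fun j _ => by ring

lemma isGreatest_range_chiSqForm (hρ : Diagonalizes U p ρ) (hσ : Diagonalizes V q σ)
    (hp : ∀ i, 0 < p i) (hq : ∀ i, 0 < q i) {s : ℝ} (hs : s ∈ Set.Icc (0 : ℝ) 1) :
    IsGreatest (Set.range (chiSqForm s ρ σ)) (∑ i, ∑ j, Complex.normSq ((Uᴴ * V) i j) *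
      ((p i - q j) ^ 2 / (s * p i + (1 - s) * q j))) := by
  have hform : ∀ Z, chiSqForm s ρ σ Z = ∑ i, ∑ j, (Complex.normSq ((Uᴴ * V) i j) *
      ((p i - q j) ^ 2 / (s * p i + (1 - s) * q j)) - (s * p i + (1 - s) * q j) *
      Complex.normSq ((Uᴴ * Z * V) i j -
        ((p i - q j) / (s * p i + (1 - s) * q j) : ℝ) * (Uᴴ * V) i j)) := fun Z => by
    rw [hρ.chiSqForm_eq hσ]
    exact Finset.sum_congr rfl fun i _ => Finset.sum_congr rfl fun j _ =>
      two_mul_re_sub_mul_normSq (convexCombo_pos hs (hp i) (hq j)) _ _ _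
  constructor
  · let W : Matrix n n ℂ :=
      of fun i j => ((p i - q j) / (s * p i + (1 - s) * q j) : ℝ) * (Uᴴ * V) i j
    have hW : Uᴴ * (U * W * Vᴴ) * V = W := by
      rw [Matrix.mul_assoc U, ← Matrix.mul_assoc, hρ.conjTranspose_mul_self, Matrix.one_mul,
        Matrix.mul_assoc, hσ.conjTranspose_mul_self, Matrix.mul_one]
    refine ⟨U * W * Vᴴ, ?_⟩
    simp only [hform, hW, W, of_apply, sub_self, map_zero, mul_zero, sub_zero]
  · rintro _ ⟨Z, rfl⟩
    rw [hform]
    exact Finset.sum_le_sum fun i _ => Finset.sum_le_sum fun j _ => sub_le_self _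
      (mul_nonneg (convexCombo_pos hs (hp i) (hq j)).le (Complex.normSq_nonneg _))

lemma chiSq_eq (hρ : Diagonalizes U p ρ) (hσ : Diagonalizes V q σ)
    (hp : ∀ i, 0 < p i) (hq : ∀ i, 0 < q i) {s : ℝ} (hs : s ∈ Set.Icc (0 : ℝ) 1) :
    chiSq s ρ σ = ∑ i, ∑ j, Complex.normSq ((Uᴴ * V) i j) *
      ((p i - q j) ^ 2 / (s * p i + (1 - s) * q j)) :=
  (hρ.isGreatest_range_chiSqForm hσ hp hq hs).isLUB.csSup_eq (Set.range_nonempty _)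

lemma eqOn_one_sub_mul_chiSq (hρ : Diagonalizes U p ρ) (hσ : Diagonalizes V q σ)
    (hp : ∀ i, 0 < p i) (hq : ∀ i, 0 < q i) :
    Set.EqOn (fun s => (1 - s) * chiSq s ρ σ) (fun s => ∑ i, ∑ j, Complex.normSq ((Uᴴ * V) i j) *
      ((1 - s) * ((p i - q j) ^ 2 / (s * p i + (1 - s) * q j)))) (Set.Icc 0 1) := fun s hs => by
  simp only [hρ.chiSq_eq hσ hp hq hs, Finset.mul_sum, mul_left_comm (1 - _ : ℝ)]

end Diagonalizes

lemma chiSqForm_le_chiSq {ρ σ : Matrix n n ℂ} (hρ : ρ.PosDef) (hσ : σ.PosDef) {s : ℝ}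
    (hs : s ∈ Set.Icc (0 : ℝ) 1) (Z : Matrix n n ℂ) : chiSqForm s ρ σ Z ≤ chiSq s ρ σ := by
  classical
  exact le_ciSup ⟨_, ((diagonalizes_eigenvectorUnitary hρ.1).isGreatest_range_chiSqForm
      (diagonalizes_eigenvectorUnitary hσ.1) hρ.eigenvalues_pos hσ.eigenvalues_pos hs).2⟩ Z

lemma chiSq_add_le {ρ₁ ρ₂ σ₁ σ₂ : Matrix n n ℂ} (hρ₁ : ρ₁.PosDef) (hρ₂ : ρ₂.PosDef)
    (hσ₁ : σ₁.PosDef) (hσ₂ : σ₂.PosDef) {s : ℝ} (hs : s ∈ Set.Icc (0 : ℝ) 1) :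
    chiSq s (ρ₁ + ρ₂) (σ₁ + σ₂) ≤ chiSq s ρ₁ σ₁ + chiSq s ρ₂ σ₂ :=
  ciSup_le fun Z => (chiSqForm_add s ρ₁ ρ₂ σ₁ σ₂ Z).trans_le
    (add_le_add (chiSqForm_le_chiSq hρ₁ hσ₁ hs Z) (chiSqForm_le_chiSq hρ₂ hσ₂ hs Z))

lemma continuousOn_one_sub_mul_sq_div_convexCombo {a b : ℝ} (ha : 0 < a) (hb : 0 < b) :
    ContinuousOn (fun s : ℝ => (1 - s) * ((a - b) ^ 2 / (s * a + (1 - s) * b)))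
      (Set.Icc 0 1) := by
  have h : ∀ s ∈ Set.Icc (0 : ℝ) 1, s * a + (1 - s) * b ≠ 0 := fun s hs =>
    (convexCombo_pos hs ha hb).ne'
  fun_prop (disch := assumption)

lemma intervalIntegrable_one_sub_mul_chiSq {ρ σ : Matrix n n ℂ} (hρ : ρ.PosDef) (hσ : σ.PosDef) :
    IntervalIntegrable (fun s => (1 - s) * chiSq s ρ σ) MeasureTheory.volume 0 1 := by
  classical
  refine (ContinuousOn.congr ?_ ((diagonalizes_eigenvectorUnitary hρ.1).eqOn_one_sub_mul_chiSq
    (diagonalizes_eigenvectorUnitary hσ.1) hρ.eigenvalues_pos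
    hσ.eigenvalues_pos)).intervalIntegrable_of_Icc zero_le_one
  exact continuousOn_finsetSum _ fun i _ => continuousOn_finsetSum _ fun j _ =>
    continuousOn_const.mul (continuousOn_one_sub_mul_sq_div_convexCombo
      (hρ.eigenvalues_pos i) (hσ.eigenvalues_pos j))

lemma integral_one_sub_mul_sq_div_convexCombo {a b : ℝ} (ha : 0 < a) (hb : 0 < b) :
    ∫ s in (0 : ℝ)..1, (1 - s) * ((a - b) ^ 2 / (s * a + (1 - s) * b)) =
      a * Real.log a - a * Real.log b - a + b := by
  have hderiv : ∀ s ∈ Set.uIcc (0 : ℝ) 1, HasDerivAt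
      (fun s : ℝ => a * Real.log (s * a + (1 - s) * b) - s * (a - b))
      ((1 - s) * ((a - b) ^ 2 / (s * a + (1 - s) * b))) s := by
    intro s hs
    rw [Set.uIcc_of_le zero_le_one] at hs
    have hpos := convexCombo_pos hs ha hb
    have hcombo : HasDerivAt (fun s : ℝ => s * a + (1 - s) * b) (1 * a + (-1) * b) s :=
      ((hasDerivAt_id' s).mul_const a).add (((hasDerivAt_id' s).const_sub 1).mul_const b)
    refine (((hcombo.log hpos.ne').const_mul a).sub
      ((hasDerivAt_id' s).mul_const (a - b))).congr_deriv ?_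
    rw [← mul_div_assoc, ← mul_div_assoc, eq_div_iff hpos.ne', sub_mul,
      div_mul_cancel₀ _ hpos.ne']
    ring
  rw [intervalIntegral.integral_eq_sub_of_hasDerivAt hderiv]
  · simp only [one_mul, sub_self, zero_mul, add_zero, sub_zero, zero_add]
    ring
  · apply ContinuousOn.intervalIntegrable
    rw [Set.uIcc_of_le zero_le_one]
    exact continuousOn_one_sub_mul_sq_div_convexCombo ha hb

variable [DecidableEq n] {U V ρ σ : Matrix n n ℂ} {p q : n → ℝ}

/-- The relative entropy `tr ρ (log ρ - log σ) - tr ρ + tr σ` of two positive definite matrices, in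
nats. The last two terms make it homogeneous and nonnegative without normalizing the traces. -/
def relEnt (ρ σ : Matrix n n ℂ) : ℝ :=
  (ρ * cfc Real.log ρ - ρ * cfc Real.log σ - ρ + σ).trace.re

lemma Diagonalizes.relEnt_eq (hρ : Diagonalizes U p ρ) (hσ : Diagonalizes V q σ) :
    relEnt ρ σ = ∑ i, ∑ j, Complex.normSq ((Uᴴ * V) i j) *
      (p i * Real.log (p i) - p i * Real.log (q j) - p i + q j) := by
  have h_self := (hρ.mul (hρ.cfc Real.log)).re_trace_mul hσ.id
  have h_cross := hρ.re_trace_mul (hσ.cfc Real.log)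
  have h_left := hρ.re_trace_mul hσ.id
  have h_right := hρ.id.re_trace_mul hσ
  simp only [mul_one, one_mul] at h_self h_left h_right
  simp only [relEnt, trace_add, trace_sub, Complex.add_re, Complex.sub_re, h_self, h_cross, h_left,
    h_right, mul_add, mul_sub, Finset.sum_add_distrib, Finset.sum_sub_distrib]

lemma Diagonalizes.integral_one_sub_mul_chiSq (hρ : Diagonalizes U p ρ) (hσ : Diagonalizes V q σ)
    (hp : ∀ i, 0 < p i) (hq : ∀ i, 0 < q i) :
    ∫ s in (0 : ℝ)..1, (1 - s) * chiSq s ρ σ = relEnt ρ σ := by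
  have hcont : ∀ i j, ContinuousOn (fun s : ℝ => Complex.normSq ((Uᴴ * V) i j) *
      ((1 - s) * ((p i - q j) ^ 2 / (s * p i + (1 - s) * q j)))) (Set.Icc 0 1) := fun i j =>
    continuousOn_const.mul (continuousOn_one_sub_mul_sq_div_convexCombo (hp i) (hq j))
  have hsum := hρ.eqOn_one_sub_mul_chiSq hσ hp hq
  rw [← Set.uIcc_of_le zero_le_one] at hsum
  rw [intervalIntegral.integral_congr hsum, hρ.relEnt_eq hσ,
    intervalIntegral.integral_finsetSum fun i _ => (continuousOn_finsetSum _ fun j _ =>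
      hcont i j).intervalIntegrable_of_Icc zero_le_one]
  refine Finset.sum_congr rfl fun i _ => ?_
  rw [intervalIntegral.integral_finsetSum fun j _ =>
    (hcont i j).intervalIntegrable_of_Icc zero_le_one]
  refine Finset.sum_congr rfl fun j _ => ?_
  rw [intervalIntegral.integral_const_mul,
    integral_one_sub_mul_sq_div_convexCombo (hp i) (hq j)]

lemma relEnt_eq_integral_chiSq (hρ : ρ.PosDef) (hσ : σ.PosDef) :
    relEnt ρ σ = ∫ s in (0 : ℝ)..1, (1 - s) * chiSq s ρ σ :=
  ((diagonalizes_eigenvectorUnitary hρ.1).integral_one_sub_mul_chiSq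
    (diagonalizes_eigenvectorUnitary hσ.1) hρ.eigenvalues_pos hσ.eigenvalues_pos).symm

theorem relEnt_add_le {ρ₁ ρ₂ σ₁ σ₂ : Matrix n n ℂ} (hρ₁ : ρ₁.PosDef) (hρ₂ : ρ₂.PosDef)
    (hσ₁ : σ₁.PosDef) (hσ₂ : σ₂.PosDef) :
    relEnt (ρ₁ + ρ₂) (σ₁ + σ₂) ≤ relEnt ρ₁ σ₁ + relEnt ρ₂ σ₂ := by
  have hint₁ := intervalIntegrable_one_sub_mul_chiSq hρ₁ hσ₁
  have hint₂ := intervalIntegrable_one_sub_mul_chiSq hρ₂ hσ₂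
  rw [relEnt_eq_integral_chiSq (hρ₁.add hρ₂) (hσ₁.add hσ₂), relEnt_eq_integral_chiSq hρ₁ hσ₁,
    relEnt_eq_integral_chiSq hρ₂ hσ₂, ← intervalIntegral.integral_add hint₁ hint₂]
  refine intervalIntegral.integral_mono_on zero_le_one
    (intervalIntegrable_one_sub_mul_chiSq (hρ₁.add hρ₂) (hσ₁.add hσ₂)) (hint₁.add hint₂)
    fun s hs => ?_
  rw [← mul_add]
  exact mul_le_mul_of_nonneg_left (chiSq_add_le hρ₁ hρ₂ hσ₁ hσ₂ hs) (sub_nonneg.2 hs.2)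

end RelativeEntropy

section VonNeumannEntropy

variable {n m : Type*} [Fintype n] [DecidableEq n] [Fintype m] [DecidableEq m]
  {A : Matrix n n ℂ} {B : Matrix m m ℂ}

lemma vnEntropy_smul (hA : A.IsHermitian) (c : ℝ) :
    vnEntropy (c • A) = c * vnEntropy A - A.trace.re * (c * Real.logb 2 c) := by
  have hd := diagonalizes_eigenvectorUnitary hA
  rw [(hd.smul c).vnEntropy_eq, hd.vnEntropy_eq, shEnt_const_mul, hd.trace_eq, Complex.ofReal_re]

lemma vnEntropy_kronecker (hA : A.IsHermitian) (hB : B.IsHermitian) :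
    vnEntropy (A ⊗ₖ B) = B.trace.re * vnEntropy A + A.trace.re * vnEntropy B := by
  have hAd := diagonalizes_eigenvectorUnitary hA
  have hBd := diagonalizes_eigenvectorUnitary hB
  rw [(hAd.kronecker hBd).vnEntropy_eq, shEnt_prod_mul, hAd.vnEntropy_eq, hBd.vnEntropy_eq,
    hAd.trace_eq, hBd.trace_eq, Complex.ofReal_re, Complex.ofReal_re]

lemma vnEntropy_submatrix (hA : A.IsHermitian) (e : m ≃ n) :
    vnEntropy (A.submatrix e e) = vnEntropy A := by
  have hd := diagonalizes_eigenvectorUnitary hA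
  rw [(hd.submatrix e).vnEntropy_eq, hd.vnEntropy_eq]
  exact Equiv.sum_comp e fun i => -(hA.eigenvalues i * Real.logb 2 (hA.eigenvalues i))

lemma vnEntropy_blockDiagonal {C : m → Matrix n n ℂ} (hC : ∀ k, (C k).IsHermitian) :
    vnEntropy (blockDiagonal C) = ∑ k, vnEntropy (C k) := by
  have hd := fun k => diagonalizes_eigenvectorUnitary (hC k)
  simp only [(Diagonalizes.blockDiagonal hd).vnEntropy_eq, (hd _).vnEntropy_eq]
  exact Fintype.sum_prod_type_right _

lemma continuous_vnEntropy_add_smul_one (hA : A.IsHermitian) :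
    Continuous fun ε : ℝ => vnEntropy (A + ε • 1) := by
  have hd := diagonalizes_eigenvectorUnitary hA
  simpa only [(hd.add (hd.id.smul _)).vnEntropy_eq, mul_one] using continuous_shEnt_add_const _

lemma re_trace_mul_cfc_log (hA : A.IsHermitian) :
    (A * cfc Real.log A).trace.re = -(Real.log 2 * vnEntropy A) := by
  have hd := diagonalizes_eigenvectorUnitary hA
  have hlog : Real.log 2 ≠ 0 := (Real.log_pos one_lt_two).ne'
  rw [(hd.mul (hd.cfc Real.log)).trace_eq, Complex.ofReal_re, hd.vnEntropy_eq,
    shEnt_eq_sum_negMulLog_div, mul_div_cancel₀ _ hlog, ← Finset.sum_neg_distrib]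
  simp only [Real.negMulLog, neg_mul, neg_neg]

lemma cfc_one_kronecker (hB : B.IsHermitian) (f : ℝ → ℝ) :
    cfc f ((1 : Matrix n n ℂ) ⊗ₖ B) = 1 ⊗ₖ cfc f B := by
  have hd := diagonalizes_eigenvectorUnitary hB
  have h_cfc_kronecker := ((Diagonalizes.one (n := n)).kronecker hd).cfc f
  have h_kronecker_cfc := (Diagonalizes.one (n := n)).kronecker (hd.cfc f)
  simp only [one_mul] at h_cfc_kronecker h_kronecker_cfc
  exact h_cfc_kronecker.eq_mul.trans h_kronecker_cfc.eq_mul.symm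

end VonNeumannEntropy

section PartialTrace

variable {u v : Type*} [Fintype u]

lemma ptraceL_eq_sum (A : Matrix (u × v) (u × v) ℂ) :
    ptraceL A = ∑ k, A.submatrix (Prod.mk k) (Prod.mk k) := by
  ext i j
  simp [ptraceL, Matrix.sum_apply]

lemma ptraceL_add (A B : Matrix (u × v) (u × v) ℂ) :
    ptraceL (A + B) = ptraceL A + ptraceL B := by
  simp only [ptraceL_eq_sum, submatrix_add, Pi.add_apply, Finset.sum_add_distrib]

lemma ptraceL_smul (c : ℝ) (A : Matrix (u × v) (u × v) ℂ) :
    ptraceL (c • A) = c • ptraceL A := by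
  simp only [ptraceL_eq_sum, submatrix_smul, Pi.smul_apply, Finset.smul_sum]

lemma ptraceL_sum {ι : Type*} (s : Finset ι) (A : ι → Matrix (u × v) (u × v) ℂ) :
    ptraceL (∑ k ∈ s, A k) = ∑ k ∈ s, ptraceL (A k) := by
  ext i j
  simp only [ptraceL, Matrix.sum_apply, of_apply]
  exact Finset.sum_comm

lemma ptraceL_kronecker (A : Matrix u u ℂ) (B : Matrix v v ℂ) :
    ptraceL (A ⊗ₖ B) = A.trace • B := by
  ext i j
  simp [ptraceL, trace, Finset.sum_mul]

lemma ptraceL_add_smul_one [DecidableEq u] [DecidableEq v] (A : Matrix (u × v) (u × v) ℂ) (ε : ℝ) :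
    ptraceL (A + ε • 1) = ptraceL A + (ε * Fintype.card u) • 1 := by
  rw [ptraceL_add, ptraceL_smul, ← one_kronecker_one, ptraceL_kronecker, trace_one, mul_smul,
    Nat.cast_smul_eq_nsmul, Nat.cast_smul_eq_nsmul]

lemma trace_ptraceL [Fintype v] (A : Matrix (u × v) (u × v) ℂ) :
    (ptraceL A).trace = A.trace := by
  simp only [trace, ptraceL, diag_apply, of_apply, Fintype.sum_prod_type_right]

lemma trace_mul_one_kronecker [DecidableEq u] [Fintype v] (A : Matrix (u × v) (u × v) ℂ)
    (M : Matrix v v ℂ) : (A * (1 ⊗ₖ M)).trace = (ptraceL A * M).trace := by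
  have hdiag : ∀ k i, (A * ((1 : Matrix u u ℂ) ⊗ₖ M)) (k, i) (k, i) =
      ∑ j, A (k, i) (k, j) * M j i := fun k i => by
    simp [mul_apply, Fintype.sum_prod_type, one_apply, Finset.sum_ite_irrel]
  rw [trace, Fintype.sum_prod_type_right]
  refine Finset.sum_congr rfl fun i _ => ?_
  simp only [diag_apply, hdiag, mul_apply (M := ptraceL A)]
  simp only [ptraceL, of_apply, Finset.sum_mul]
  exact Finset.sum_comm

lemma ptraceL_isHermitian {A : Matrix (u × v) (u × v) ℂ} (hA : A.IsHermitian) :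
    (ptraceL A).IsHermitian := by
  ext i j
  simp only [ptraceL, conjTranspose_apply, of_apply, star_sum, hA.apply]

lemma ptraceL_posSemidef {A : Matrix (u × v) (u × v) ℂ} (hA : A.PosSemidef) :
    (ptraceL A).PosSemidef := by
  rw [ptraceL_eq_sum]
  exact posSemidef_sum _ fun k _ => hA.submatrix _

lemma ptraceL_posDef [Nonempty u] {A : Matrix (u × v) (u × v) ℂ} (hA : A.PosDef) :
    (ptraceL A).PosDef := by
  rw [ptraceL_eq_sum]
  exact posDef_sum Finset.univ_nonempty fun k _ => hA.submatrix (Prod.mk_right_injective k)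

end PartialTrace

section ConditionalEntropy

variable {u v : Type*} [Fintype u] [Fintype v] [DecidableEq u] [DecidableEq v]
  {A B : Matrix (u × v) (u × v) ℂ}

/-- The conditional entropy `S(U|V)` of an operator on `U ⊗ V` that need not be normalized. -/
def condEnt (A : Matrix (u × v) (u × v) ℂ) : ℝ := vnEntropy A - vnEntropy (ptraceL A)

lemma relEnt_one_kronecker_ptraceL (hA : A.IsHermitian) :
    relEnt A (1 ⊗ₖ ptraceL A) = (Fintype.card u - 1) * A.trace.re - Real.log 2 * condEnt A := by
  have hmarginal := ptraceL_isHermitian hA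
  rw [relEnt, cfc_one_kronecker hmarginal, trace_add, trace_sub, trace_sub,
    trace_mul_one_kronecker, trace_kronecker, trace_one, trace_ptraceL, Complex.add_re,
    Complex.sub_re, Complex.sub_re, re_trace_mul_cfc_log hA, re_trace_mul_cfc_log hmarginal,
    condEnt, ← Complex.ofReal_natCast, Complex.re_ofReal_mul]
  ring

lemma condEnt_add_le_of_posDef [Nonempty u] (hA : A.PosDef) (hB : B.PosDef) :
    condEnt A + condEnt B ≤ condEnt (A + B) := by
  have hsub := relEnt_add_le hA hB (PosDef.one.kronecker (ptraceL_posDef hA))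
    (PosDef.one.kronecker (ptraceL_posDef hB))
  rw [← kronecker_add, ← ptraceL_add, relEnt_one_kronecker_ptraceL hA.isHermitian,
    relEnt_one_kronecker_ptraceL hB.isHermitian,
    relEnt_one_kronecker_ptraceL (hA.add hB).isHermitian, trace_add, Complex.add_re] at hsub
  refine le_of_mul_le_mul_left ?_ (Real.log_pos one_lt_two)
  linarith

lemma continuous_condEnt_add_smul_one (hA : A.IsHermitian) :
    Continuous fun ε : ℝ => condEnt (A + ε • 1) := by
  simp only [condEnt, ptraceL_add_smul_one]
  exact (continuous_vnEntropy_add_smul_one hA).sub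
    ((continuous_vnEntropy_add_smul_one (ptraceL_isHermitian hA)).comp (continuous_mul_const _))

lemma condEnt_smul (hA : A.IsHermitian) (c : ℝ) : condEnt (c • A) = c * condEnt A := by
  rw [condEnt, condEnt, ptraceL_smul, vnEntropy_smul hA, vnEntropy_smul (ptraceL_isHermitian hA),
    trace_ptraceL]
  ring

lemma condEnt_zero : condEnt (0 : Matrix (u × v) (u × v) ℂ) = 0 := by
  simpa using condEnt_smul (isHermitian_zero (n := u × v) (α := ℂ)) 0

/-- Equivalent to strong subadditivity. -/
theorem condEnt_add_le (hA : A.PosSemidef) (hB : B.PosSemidef) :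
    condEnt A + condEnt B ≤ condEnt (A + B) := by
  rcases isEmpty_or_nonempty u with hu | hu
  · simp only [Subsingleton.elim A 0, Subsingleton.elim B 0, add_zero, condEnt_zero, le_refl]
  have hpos {C : Matrix (u × v) (u × v) ℂ} (hC : C.PosSemidef) {ε : ℝ} (hε : 0 < ε) :
      (C + ε • 1).PosDef := PosDef.posSemidef_add hC (PosDef.one.smul hε)
  have hcont := (continuous_condEnt_add_smul_one hA.isHermitian).add
    (continuous_condEnt_add_smul_one hB.isHermitian)
  have hcont_add := (continuous_condEnt_add_smul_one (hA.add hB).isHermitian).comp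
    (continuous_const_mul 2)
  have hlim := hcont.continuousWithinAt.closure_le (s := Set.Ioi 0) (x := 0) (by simp)
    hcont_add.continuousWithinAt fun ε hε => by
      have hsplit : A + B + (2 * ε) • 1 = (A + ε • 1) + (B + ε • 1) := by
        rw [two_mul, add_smul]
        abel
      simp only [Function.comp_apply, hsplit]
      exact condEnt_add_le_of_posDef (hpos hA hε) (hpos hB hε)
  simpa using hlim

lemma sum_condEnt_le {ι : Type*} (s : Finset ι) {A : ι → Matrix (u × v) (u × v) ℂ}
    (hA : ∀ k ∈ s, (A k).PosSemidef) : ∑ k ∈ s, condEnt (A k) ≤ condEnt (∑ k ∈ s, A k) := by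
  have h := Finset.le_sum_of_subadditive_on_pred (fun A => -condEnt A) PosSemidef
    (by rw [condEnt_zero, neg_zero]) (fun A B hA hB => by linarith [condEnt_add_le hA hB])
    (fun A B hA hB => hA.add hB) A hA
  rwa [Finset.sum_neg_distrib, neg_le_neg_iff] at h

lemma condEnt_kronecker {A : Matrix u u ℂ} {B : Matrix v v ℂ} (hA : A.IsHermitian)
    (hB : B.IsHermitian) : condEnt (A ⊗ₖ B) =
      B.trace.re * (vnEntropy A + A.trace.re * Real.logb 2 A.trace.re) := by
  have htrace : A.trace = (A.trace.re : ℂ) := by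
    rw [(diagonalizes_eigenvectorUnitary hA).trace_eq, Complex.ofReal_re]
  rw [condEnt, vnEntropy_kronecker hA hB, ptraceL_kronecker, htrace, Complex.coe_smul,
    vnEntropy_smul hB, Complex.ofReal_re]
  ring

end ConditionalEntropy

section ClassicalRegister

lemma isHermitian_blockDiagonal {n X : Type*} [DecidableEq X] {A : X → Matrix n n ℂ}
    (hA : ∀ x, (A x).IsHermitian) : (blockDiagonal A).IsHermitian := by
  rw [IsHermitian, blockDiagonal_conjTranspose]
  exact congrArg _ (funext hA)

variable {n X : Type*} [DecidableEq n]

lemma outerPr_stdb (k : n) : outerPr (stdb k) = diagonal (Pi.single k 1) := by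
  ext i j
  simp only [outerPr, stdb, diagonal_apply, of_apply, Pi.single_apply]
  split_ifs <;> simp_all

variable [Fintype n] [Fintype X]

lemma diagonalizes_outerPr_stdb (k : n) :
    Diagonalizes 1 (Pi.single k 1) (outerPr (stdb k)) where
  conjTranspose_mul_self := by simp
  eq_mul := by
    rw [outerPr_stdb, conjTranspose_one, Matrix.mul_one, Matrix.one_mul]
    exact congrArg diagonal (funext fun i => by by_cases hi : i = k <;> simp [hi])

lemma isDensity_outerPr_stdb (k : n) : IsDensity (outerPr (stdb k)) := by
  refine ⟨posSemidef_vecMulVec_self_star (stdb k), ?_⟩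
  rw [(diagonalizes_outerPr_stdb k).trace_eq]
  simp

lemma vnEntropy_outerPr_stdb (k : n) : vnEntropy (outerPr (stdb k)) = 0 := by
  rw [(diagonalizes_outerPr_stdb k).vnEntropy_eq]
  exact Finset.sum_eq_zero fun i _ => by by_cases hi : i = k <;> simp [hi]

lemma vnEntropy_sum_outerPr_stdb_kronecker [DecidableEq X] {A : X → Matrix n n ℂ}
    (hA : ∀ x, (A x).IsHermitian) :
    vnEntropy (∑ x, outerPr (stdb x) ⊗ₖ A x) = ∑ x, vnEntropy (A x) := by
  have hblock : ∑ x, outerPr (stdb x) ⊗ₖ A x =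
      (blockDiagonal A).submatrix (Equiv.prodComm X n) (Equiv.prodComm X n) := by
    ext ⟨x, i⟩ ⟨y, j⟩
    by_cases hxy : x = y <;>
      simp [Matrix.sum_apply, blockDiagonal_apply, outerPr_stdb, hxy, Pi.single_apply]
  rw [hblock, vnEntropy_submatrix (isHermitian_blockDiagonal hA), vnEntropy_blockDiagonal hA]

lemma condEnt_kronecker_of_isDensity {m : Type*} [Fintype m] [DecidableEq m] {A : Matrix n n ℂ}
    {B : Matrix m m ℂ} (hA : IsDensity A) (hB : B.IsHermitian) :
    condEnt (A ⊗ₖ B) = B.trace.re * vnEntropy A := by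
  simp [condEnt_kronecker hA.1.isHermitian hB, hA.2]

lemma vnEntropy_sum_le {A : X → Matrix n n ℂ} (hA : ∀ x, (A x).PosSemidef) :
    vnEntropy (∑ x, A x) ≤ ∑ x, vnEntropy (A x) := by
  classical
  have hreg := fun x : X => isDensity_outerPr_stdb x
  have hle := sum_condEnt_le Finset.univ fun x _ => (hreg x).1.kronecker (hA x)
  simp only [condEnt_kronecker_of_isDensity (hreg _) (hA _).isHermitian, vnEntropy_outerPr_stdb,
    mul_zero, Finset.sum_const_zero] at hle
  rw [condEnt, vnEntropy_sum_outerPr_stdb_kronecker fun x => (hA x).isHermitian] at hle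
  simp only [ptraceL_sum, ptraceL_kronecker, (hreg _).2, one_smul] at hle
  exact sub_nonneg.1 hle

/-- Concavity of the entropy, as superadditivity of the conditional entropy given a trivial
system. -/
lemma sum_vnEntropy_le {A : X → Matrix n n ℂ} (hA : ∀ x, (A x).PosSemidef) :
    ∑ x, vnEntropy (A x) ≤ vnEntropy (∑ x, A x) + shEnt (fun x => (A x).trace.re) +
      (∑ x, (A x).trace.re) * Real.logb 2 (∑ x, (A x).trace.re) := by
  have htrivial : ∀ {B : Matrix n n ℂ}, B.PosSemidef → condEnt (B ⊗ₖ (1 : Matrix Unit Unit ℂ)) =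
      vnEntropy B + B.trace.re * Real.logb 2 B.trace.re := fun hB => by
    simp [condEnt_kronecker hB.isHermitian isHermitian_one]
  have hle := sum_condEnt_le Finset.univ fun x _ =>
    (hA x).kronecker (PosSemidef.one (n := Unit) (R := ℂ))
  have hsum : ∑ x, A x ⊗ₖ (1 : Matrix Unit Unit ℂ) = (∑ x, A x) ⊗ₖ 1 := by
    ext i j
    simp [Matrix.sum_apply]
  rw [hsum, htrivial (posSemidef_sum _ fun x _ => hA x)] at hle
  simp only [htrivial (hA _), Finset.sum_add_distrib, trace_sum, Complex.re_sum] at hle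
  simp only [shEnt, Finset.sum_neg_distrib]
  linarith

lemma condEnt_sum_le {m : Type*} [Fintype m] [DecidableEq m] {A : X → Matrix (n × m) (n × m) ℂ}
    (hA : ∀ x, (A x).PosSemidef) :
    condEnt (∑ x, A x) ≤ ∑ x, condEnt (A x) + shEnt (fun x => (A x).trace.re) +
      (∑ x, (A x).trace.re) * Real.logb 2 (∑ x, (A x).trace.re) := by
  have hjoint := vnEntropy_sum_le hA
  have hmarginal := sum_vnEntropy_le fun x => ptraceL_posSemidef (hA x)
  simp only [trace_ptraceL] at hmarginal
  simp only [condEnt, ptraceL_sum, Finset.sum_sub_distrib]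
  linarith

variable {u v Y : Type*} [DecidableEq Y]

/-- The operator `∑ y, A y ⊗ |y⟩⟨y|` on `U ⊗ (V ⊗ Y)`, in which a classical register `Y` next to
`V` records the value `y`. -/
def classicalMemory (A : Y → Matrix (u × v) (u × v) ℂ) : Matrix (u × v × Y) (u × v × Y) ℂ :=
  (blockDiagonal A).submatrix (Equiv.prodAssoc u v Y).symm (Equiv.prodAssoc u v Y).symm

lemma ptraceL_classicalMemory [Fintype u] (A : Y → Matrix (u × v) (u × v) ℂ) :
    ptraceL (classicalMemory A) = blockDiagonal fun y => ptraceL (A y) := by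
  ext ⟨j, y⟩ ⟨j', y'⟩
  by_cases hy : y = y' <;> simp [classicalMemory, ptraceL, blockDiagonal_apply, hy]

lemma condEnt_classicalMemory [Fintype u] [Fintype v] [Fintype Y] [DecidableEq u]
    [DecidableEq v] {A : Y → Matrix (u × v) (u × v) ℂ} (hA : ∀ y, (A y).IsHermitian) :
    condEnt (classicalMemory A) = ∑ y, condEnt (A y) := by
  rw [condEnt, ptraceL_classicalMemory, classicalMemory,
    vnEntropy_submatrix (isHermitian_blockDiagonal hA), vnEntropy_blockDiagonal hA,
    vnEntropy_blockDiagonal fun y => ptraceL_isHermitian (hA y), ← Finset.sum_sub_distrib]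
  rfl

end ClassicalRegister

section PreparedState

variable {X Y E U V : Type*} [Fintype X] {σU : X → Matrix U U ℂ} {σV : X → Matrix V V ℂ}

lemma kronecker_sum_smul {k l m n : Type*} [Fintype Y] (A : Matrix k l ℂ) (c : Y → ℝ)
    (B : Y → Matrix m n ℂ) : A ⊗ₖ ∑ y, c y • B y = ∑ y, c y • (A ⊗ₖ B y) := by
  ext ⟨i, j⟩ ⟨i', j'⟩
  simp only [Matrix.sum_apply, Matrix.smul_apply, kronecker_apply, Finset.mul_sum, mul_smul_comm]

/-- The state `∑ x, σ_U^x ⊗ (σ_V^x ⊗ τ^x)` of `UVE` obtained by encoding `x` into `U` and `V`, where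
`τ^x` is the state of `E` given `x`, with the probability of `x` as its trace. -/
def preparedState (σU : X → Matrix U U ℂ) (σV : X → Matrix V V ℂ) (τ : X → Matrix E E ℂ) :
    Matrix (U × V × E) (U × V × E) ℂ :=
  ∑ x, σU x ⊗ₖ (σV x ⊗ₖ τ x)

lemma preparedState_sum_smul_outerPr_stdb [Fintype Y] [DecidableEq Y] (P : X → Y → ℝ)
    (σU : X → Matrix U U ℂ) (σV : X → Matrix V V ℂ) :
    preparedState σU σV (fun x => ∑ y, P x y • outerPr (stdb y)) =
      classicalMemory fun y => ∑ x, P x y • (σU x ⊗ₖ σV x) := by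
  ext ⟨i, j, y⟩ ⟨i', j', y'⟩
  by_cases hy : y = y' <;>
    simp [preparedState, classicalMemory, Matrix.sum_apply, blockDiagonal_apply, outerPr_stdb,
      Pi.single_apply, hy, mul_comm, mul_left_comm]

variable [Fintype U]

lemma ptraceL_preparedState (hU : ∀ x, (σU x).trace = 1) (σV : X → Matrix V V ℂ)
    (τ : X → Matrix E E ℂ) : ptraceL (preparedState σU σV τ) = ∑ x, σV x ⊗ₖ τ x := by
  simp only [preparedState, ptraceL_sum, ptraceL_kronecker, hU, one_smul]

variable [Fintype V] [DecidableEq U] [DecidableEq V]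

lemma vnEntropy_sub_eq_condEnt_preparedState [Fintype Y] [Fintype E] [DecidableEq E]
    (hU : ∀ x, (σU x).trace = 1) (σV : X → Matrix V V ℂ) (P : X → Y → ℝ)
    (τ : X → Y → Matrix E E ℂ) :
    vnEntropy (∑ x, ∑ y, P x y • (σU x ⊗ₖ (σV x ⊗ₖ τ x y))) -
        vnEntropy (∑ x, ∑ y, P x y • (σV x ⊗ₖ τ x y)) =
      condEnt (preparedState σU σV fun x => ∑ y, P x y • τ x y) := by
  rw [condEnt, ptraceL_preparedState hU]
  simp only [preparedState, kronecker_sum_smul]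

lemma condEnt_preparedState_le [Fintype E] [DecidableEq E] (hU : ∀ x, IsDensity (σU x))
    (hV : ∀ x, IsDensity (σV x)) {τ : X → Matrix E E ℂ} (hτ : ∀ x, (τ x).PosSemidef) :
    condEnt (preparedState σU σV τ) ≤ ∑ x, (τ x).trace.re * vnEntropy (σU x) +
      shEnt (fun x => (τ x).trace.re) +
        (∑ x, (τ x).trace.re) * Real.logb 2 (∑ x, (τ x).trace.re) := by
  have hVτ := fun x => (hV x).1.kronecker (hτ x)
  have hle := condEnt_sum_le fun x => (hU x).1.kronecker (hVτ x)
  simpa only [preparedState, condEnt_kronecker_of_isDensity (hU _) (hVτ _).isHermitian,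
    trace_kronecker, (hU _).2, (hV _).2, one_mul] using hle

lemma sum_mul_vnEntropy_le_condEnt {p : X → ℝ} (hp : ∀ x, 0 ≤ p x)
    (hU : ∀ x, IsDensity (σU x)) (hV : ∀ x, IsDensity (σV x)) :
    ∑ x, p x * vnEntropy (σU x) ≤ condEnt (∑ x, p x • (σU x ⊗ₖ σV x)) := by
  have hUV := fun x => (hU x).1.kronecker (hV x).1
  have hle := sum_condEnt_le Finset.univ fun x _ => (hUV x).smul (hp x)
  simpa only [condEnt_smul (hUV _).isHermitian,
    condEnt_kronecker_of_isDensity (hU _) (hV _).1.isHermitian, (hV _).2, Complex.one_re,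
    one_mul] using hle

lemma sum_condEnt_le_sum_condEnt_channel {Y' : Type*} [Fintype Y] [Fintype Y']
    {ω : Y → Matrix (U × V) (U × V) ℂ} (hω : ∀ y, (ω y).PosSemidef) {Q : Y → Y' → ℝ}
    (hQ0 : ∀ y y', 0 ≤ Q y y') (hQ1 : ∀ y, ∑ y', Q y y' = 1) :
    ∑ y, condEnt (ω y) ≤ ∑ y', condEnt (∑ y, Q y y' • ω y) :=
  calc ∑ y, condEnt (ω y)
      = ∑ y, ∑ y', condEnt (Q y y' • ω y) := by
        simp only [condEnt_smul (hω _).isHermitian, ← Finset.sum_mul, hQ1, one_mul]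
    _ = ∑ y', ∑ y, condEnt (Q y y' • ω y) := Finset.sum_comm
    _ ≤ ∑ y', condEnt (∑ y, Q y y' • ω y) :=
        Finset.sum_le_sum fun y' _ => sum_condEnt_le _ fun y _ => (hω y).smul (hQ0 y y')

end PreparedState

section EntropyGaps

variable {X Y Y' E : Type*} [Fintype X] [Fintype Y] [Fintype Y'] [Fintype E] [DecidableEq E]
  {P : X → Y → ℝ} {τ : X → Matrix E E ℂ}

/-- The attainable values of `S(U|VE) - S(U|VY)`, with `S(U|VY)` written as the sum over `y` of the
conditional entropies of the unnormalized states of `UV` given `y`. -/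
def entropyGaps (P : X → Y → ℝ) (τ : X → Matrix E E ℂ) : Set ℝ :=
  {r | ∃ (dU dV : ℕ) (σU : X → Matrix (Fin dU) (Fin dU) ℂ) (σV : X → Matrix (Fin dV) (Fin dV) ℂ),
    (∀ x, IsDensity (σU x)) ∧ (∀ x, IsDensity (σV x)) ∧
      r = condEnt (preparedState σU σV τ) - ∑ y, condEnt (∑ x, P x y • (σU x ⊗ₖ σV x))}

lemma Mmeas_eq_sSup_entropyGaps [DecidableEq Y] (P : X → Y → ℝ) (σE : X → Y → Matrix E E ℂ) :
    Mmeas P σE = sSup (entropyGaps P fun x => ∑ y, P x y • σE x y) := by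
  refine congrArg sSup (Set.ext fun r => exists₄_congr fun dU dV σU σV =>
    and_congr_right fun hU => and_congr_right fun hV => ?_)
  have hherm : ∀ y, (∑ x, P x y • (σU x ⊗ₖ σV x)).IsHermitian := fun y =>
    isSelfAdjoint_sum _ fun x _ => (IsSelfAdjoint.all (P x y)).smul
      ((hU x).1.kronecker (hV x).1).isHermitian
  rw [vnEntropy_sub_eq_condEnt_preparedState fun x => (hU x).2,
    vnEntropy_sub_eq_condEnt_preparedState fun x => (hU x).2,
    preparedState_sum_smul_outerPr_stdb, condEnt_classicalMemory hherm]

lemma entropyGaps_nonempty (P : X → Y → ℝ) (τ : X → Matrix E E ℂ) : (entropyGaps P τ).Nonempty :=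
  have hone : IsDensity (1 : Matrix (Fin 1) (Fin 1) ℂ) := ⟨PosSemidef.one, by simp⟩
  ⟨_, 1, 1, fun _ => 1, fun _ => 1, fun _ => hone, fun _ => hone, rfl⟩

lemma bddAbove_entropyGaps (hP : ∀ x y, 0 ≤ P x y) (hτ : ∀ x, (τ x).PosSemidef)
    (htrace : ∀ x, (τ x).trace.re = ∑ y, P x y) : BddAbove (entropyGaps P τ) := by
  refine ⟨shEnt (fun x => (τ x).trace.re) +
    (∑ x, (τ x).trace.re) * Real.logb 2 (∑ x, (τ x).trace.re), ?_⟩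
  rintro _ ⟨dU, dV, σU, σV, hU, hV, rfl⟩
  have hupper := condEnt_preparedState_le hU hV hτ
  have hlower : ∑ x, (τ x).trace.re * vnEntropy (σU x) ≤
      ∑ y, condEnt (∑ x, P x y • (σU x ⊗ₖ σV x)) := by
    simp only [htrace, Finset.sum_mul]
    rw [Finset.sum_comm]
    exact Finset.sum_le_sum fun y _ => sum_mul_vnEntropy_le_condEnt (fun x => hP x y) hU hV
  linarith

lemma exists_le_of_mem_entropyGaps_channel (hP : ∀ x y, 0 ≤ P x y) {Q : Y → Y' → ℝ}
    (hQ0 : ∀ y y', 0 ≤ Q y y') (hQ1 : ∀ y, ∑ y', Q y y' = 1) {r : ℝ}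
    (hr : r ∈ entropyGaps (fun x y' => ∑ y, P x y * Q y y') τ) : ∃ t ∈ entropyGaps P τ, r ≤ t := by
  obtain ⟨dU, dV, σU, σV, hU, hV, rfl⟩ := hr
  have hpos : ∀ y, (∑ x, P x y • (σU x ⊗ₖ σV x)).PosSemidef := fun y =>
    posSemidef_sum _ fun x _ => ((hU x).1.kronecker (hV x).1).smul (hP x y)
  have hchannel := sum_condEnt_le_sum_condEnt_channel hpos hQ0 hQ1
  have hmix : ∀ y', ∑ y, Q y y' • ∑ x, P x y • (σU x ⊗ₖ σV x) =
      ∑ x, (∑ y, P x y * Q y y') • (σU x ⊗ₖ σV x) := fun y' => by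
    simp only [Finset.smul_sum, Finset.sum_smul, smul_smul, mul_comm (Q _ y')]
    exact Finset.sum_comm
  simp only [hmix] at hchannel
  exact ⟨_, ⟨dU, dV, σU, σV, hU, hV, rfl⟩, sub_le_sub_left hchannel _⟩

end EntropyGaps

lemma sum_smul_channel_eq {Y Y' E : Type*} [Fintype Y] [Fintype Y'] (p : Y → ℝ) {Q : Y → Y' → ℝ}
    (hQ : ∀ y, ∑ y', Q y y' = 1) (ρ : Y → Matrix E E ℂ) :
    ∑ y', ∑ y, (p y * Q y y') • ρ y = ∑ y, p y • ρ y := by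
  rw [Finset.sum_comm]
  simp only [← Finset.sum_smul, ← Finset.mul_sum, hQ, mul_one]

theorem M_mono_channel_on_Y_general
    {X Y Y' E : Type*} [Fintype X] [Fintype Y] [Fintype Y'] [Fintype E]
    [DecidableEq Y] [DecidableEq Y'] [DecidableEq E]
    (P : X → Y → ℝ) (hP : ∀ x y, 0 ≤ P x y)
    (σE : X → Y → Matrix E E ℂ) (hσE : ∀ x y, IsDensity (σE x y))
    (Q : Y → Y' → ℝ) (hQ0 : ∀ y y', 0 ≤ Q y y') (hQ1 : ∀ y, ∑ y', Q y y' = 1)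
    (σE'' : X → Y' → Matrix E E ℂ)
    (hmarginal : ∀ x, ∑ y', (∑ y, P x y * Q y y') • σE'' x y' = ∑ y, P x y • σE x y) :
    Mmeas (fun x y' => ∑ y, P x y * Q y y') σE'' ≤ Mmeas P σE := by
  have hpos : ∀ x, (∑ y, P x y • σE x y).PosSemidef := fun x =>
    posSemidef_sum _ fun y _ => (hσE x y).1.smul (hP x y)
  have htrace : ∀ x, (∑ y, P x y • σE x y).trace.re = ∑ y, P x y := fun x => by
    simp [trace_sum, trace_smul, (hσE x _).2]
  rw [Mmeas_eq_sSup_entropyGaps, Mmeas_eq_sSup_entropyGaps, funext hmarginal]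
  refine csSup_le (entropyGaps_nonempty _ _) fun r hr => ?_
  obtain ⟨t, ht, hrt⟩ := exists_le_of_mem_entropyGaps_channel hP hQ0 hQ1 hr
  exact le_csSup_of_le (bddAbove_entropyGaps hP hpos htrace) ht hrt

/-- applying a classical channel `P_{Y'|Y}` to the second classical part of a
ccq-state can only decrease `M`: `M(X;Y';E) ≤ M(X;Y;E)`. Here the ccq-state `σ_{XY'E}` has
distribution `P''(x,y') = Σ_y P(x,y) Q(y'|y)` and conditional states `σE''` characterized by
`P''(x,y')·σE''(x,y') = Σ_y P(x,y) Q(y'|y) σE(x,y)`. -/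
theorem M_mono_channel_on_Y
    {X Y Y' E : Type*} [Fintype X] [Fintype Y] [Fintype Y'] [Fintype E]
    [DecidableEq Y] [DecidableEq Y'] [DecidableEq E]
    (P : X → Y → ℝ) (hP0 : ∀ x y, 0 ≤ P x y) (hP1 : ∑ x, ∑ y, P x y = 1)
    (σE : X → Y → Matrix E E ℂ) (hσE : ∀ x y, IsDensity (σE x y))
    (Q : Y → Y' → ℝ) (hQ0 : ∀ y y', 0 ≤ Q y y') (hQ1 : ∀ y, ∑ y', Q y y' = 1)
    (σE'' : X → Y' → Matrix E E ℂ)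
    (hσE'' : ∀ x y', ((∑ y, P x y * Q y y' : ℝ)) • σE'' x y'
      = ∑ y, (P x y * Q y y') • σE x y) :
    Mmeas (fun x y' => ∑ y, P x y * Q y y') σE'' ≤ Mmeas P σE := by
  exact M_mono_channel_on_Y_general P hP0 σE hσE Q hQ0 hQ1 σE'' fun x => by
    simpa only [hσE''] using sum_smul_channel_eq (P x) hQ1 (σE x)
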